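/- Let (A,B,C,D) with A ∈ ℝ^{n×n}, B ∈ ℝ^{n×m}, C ∈ ℝ^{m×n}, D ∈ ℝ^{m×m} be a minimal realization of an all-pass function. Then for every A-invariant subspace X ⊆ ℝⁿ there exists a symmetric matrix Q with N(Q) positive semidefinite of rank m and ker Q = X. Moreover, if A is unmixed, then for every A-invariant subspace X there is exactly one symmetric matrix Q with N(Q) positive semidefinite of rank m and ker Q = X; i.e., the map Q ↦ ker Q is a bijection between the set of symmetric solutions of the constrained LMI and the set of A-invariant subspaces of ℝⁿ. -/

import Mathlib

open Matrix

noncomputable section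

/-- The pair `(A,B)` is reachable: the columns of `B, AB, …, A^{N-1}B` span the state space. -/
def Reachable {N M : Type*} [Fintype N] [DecidableEq N] [Fintype M]
    (A : Matrix N N ℝ) (B : Matrix N M ℝ) : Prop :=
  Submodule.span ℝ
    {v : N → ℝ | ∃ k < Fintype.card N, ∃ j : M, v = (A ^ k) *ᵥ (fun i => B i j)} = ⊤

/-- The pair `(A,C)` is observable: `⋂_{k<N} ker (C A^k) = {0}`. -/
def Observable {N M : Type*} [Fintype N] [DecidableEq N] [Fintype M]
    (A : Matrix N N ℝ) (C : Matrix M N ℝ) : Prop :=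
  ∀ v : N → ℝ, (∀ k < Fintype.card N, (C * A ^ k) *ᵥ v = 0) → v = 0

/-- The transfer function `z ↦ C (zI - A)⁻¹ B + D` is all-pass: for every real `z ≠ 0`
with `zI - A` and `z⁻¹I - Aᵀ` invertible,
`(C(zI−A)⁻¹B + D) (Bᵀ(z⁻¹I−Aᵀ)⁻¹Cᵀ + Dᵀ) = I`. -/
def AllPass {N M : Type*} [Fintype N] [DecidableEq N] [Fintype M] [DecidableEq M]
    (A : Matrix N N ℝ) (B : Matrix N M ℝ) (C : Matrix M N ℝ) (D : Matrix M M ℝ) : Prop :=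
  ∀ z : ℝ, z ≠ 0 → IsUnit (z • (1 : Matrix N N ℝ) - A) →
    IsUnit (z⁻¹ • (1 : Matrix N N ℝ) - Aᵀ) →
    (C * (z • (1 : Matrix N N ℝ) - A)⁻¹ * B + D) *
      (Bᵀ * (z⁻¹ • (1 : Matrix N N ℝ) - Aᵀ)⁻¹ * Cᵀ + Dᵀ) = 1

/-- `A` is unmixed: no pair of (complex) eigenvalues `λ, μ` of `A` satisfies `λμ = 1`. -/
def Unmixed {N : Type*} [Fintype N] [DecidableEq N] (A : Matrix N N ℝ) : Prop :=
  ∀ lam mu : ℂ, lam ∈ spectrum ℂ (A.map (algebraMap ℝ ℂ)) →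
    mu ∈ spectrum ℂ (A.map (algebraMap ℝ ℂ)) → lam * mu ≠ 1

/-!
Observability together with the all-pass identity produces a symmetric `P` with `A P Aᵀ - P = B Bᵀ`.
Indeed, write `T` for the transfer function. The all-pass identity turns
`(T(z) T(y)ᵀ - 1) / (z y - 1)` into `C (z - A)⁻¹ V(y)` with an explicit `V`; the left-hand side is
symmetric under `y ↔ z` and transposition, so there is a symmetric `P` with
`P (C (y - A)⁻¹)ᵀ = V(y)`, and letting `y → ∞` gives the Stein equation.

By reachability `A - 1` is invertible. Put `F = (A - 1)⁻¹ + 1/2` and `G = (A - 1)⁻¹ B`; then `F` has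
the same invariant subspaces as `A`, the Stein equation becomes `F P + P Fᵀ = G Gᵀ`, and `N(Q)` is
congruent to `[[Fᵀ Q + Q F, -Q G], [-Gᵀ Q, 1]]`. Hence for symmetric `Q` the constrained LMI is the
Riccati equation `Fᵀ Q + Q F = Q G Gᵀ Q`, whose solutions have `F`-invariant kernel. If `X = ker π`
is `F`-invariant with `π` surjective, then `π P πᵀ` is invertible, again by reachability, and
`Q = πᵀ (π P πᵀ)⁻¹ π` is a solution with kernel `X`.

If `A` is unmixed, the characteristic polynomial `χ` of `F` is coprime to `χ(-x)`. For solutions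
`Q₁`, `Q₂` with the same kernel, `Q₁ - Q₂` is annihilated by both polynomials evaluated at
`G Gᵀ Q₂ - F`, so it vanishes.
-/

section LinearAlgebra

variable {K N M κ : Type*} [Field K] [Fintype N]

theorem inv_mulVec_mem [DecidableEq N] {A : Matrix N N K} (hA : IsUnit A)
    {X : Submodule K (N → K)} (hX : ∀ v ∈ X, A *ᵥ v ∈ X) : ∀ v ∈ X, A⁻¹ *ᵥ v ∈ X := by
  have hdet := (isUnit_iff_isUnit_det A).mp hA
  have hle : X.map A.mulVecLin ≤ X := Submodule.map_le_iff_le_comap.mpr hX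
  have hmap : X.map A.mulVecLin = X := Submodule.eq_of_le_of_finrank_eq hle
    (Submodule.equivMapOfInjective _ (mulVec_injective_of_isUnit hA) X).finrank_eq.symm
  intro v hv
  obtain ⟨w, hw, rfl⟩ := hmap.ge hv
  simpa [nonsing_inv_mul _ hdet] using hw

theorem exists_mul_eq_one_and_ker_eq (X : Submodule K (N → K)) :
    ∃ (k : ℕ) (π : Matrix (Fin k) N K) (σ : Matrix N (Fin k) K),
      π * σ = 1 ∧ LinearMap.ker π.mulVecLin = X := by
  classical
  let e := (Module.finBasis K ((N → K) ⧸ X)).equivFun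
  let f := e.toLinearMap ∘ₗ X.mkQ
  have hf : LinearMap.range f = ⊤ :=
    LinearMap.range_eq_top.mpr (e.surjective.comp X.mkQ_surjective)
  obtain ⟨g, hfg⟩ := LinearMap.exists_rightInverse_of_surjective f hf
  refine ⟨_, LinearMap.toMatrix' f, LinearMap.toMatrix' g, ?_, ?_⟩
  · rw [← LinearMap.toMatrix'_comp, hfg, LinearMap.toMatrix'_id]
  · rw [← toLin'_apply', toLin'_toMatrix', LinearEquiv.ker_comp, X.ker_mkQ]

theorem eq_mul_mul_of_ker_le [Fintype κ] [DecidableEq κ] {π : Matrix κ N K} {σ : Matrix N κ K}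
    (hπσ : π * σ = 1) {L : Matrix M N K}
    (hker : LinearMap.ker π.mulVecLin ≤ LinearMap.ker L.mulVecLin) : L = L * σ * π := by
  refine mulVec_injective (funext fun x => ?_)
  have hx : x - (σ * π) *ᵥ x ∈ LinearMap.ker π.mulVecLin := by
    rw [LinearMap.mem_ker, mulVecLin_apply, mulVec_sub, mulVec_mulVec, ← Matrix.mul_assoc, hπσ,
      Matrix.one_mul, sub_self]
  have hLx : L *ᵥ (x - (σ * π) *ᵥ x) = 0 := hker hx
  rwa [mulVec_sub, mulVec_mulVec, ← Matrix.mul_assoc, sub_eq_zero] at hLx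

theorem mul_eq_zero_of_ker_le {Q L : Matrix M N K} {T : Matrix N κ K}
    (hker : LinearMap.ker Q.mulVecLin ≤ LinearMap.ker L.mulVecLin) (hQT : Q * T = 0) :
    L * T = 0 := by
  ext i j
  have hcol : Q *ᵥ T.col j = 0 := funext fun k => congrFun (congrFun hQT k) j
  have hLcol : L *ᵥ T.col j = 0 := hker hcol
  exact congrFun hLcol i

theorem span_range_eq_top_of_dotProduct {ι : Type*} {w : ι → N → K}
    (hw : ∀ x, (∀ i, w i ⬝ᵥ x = 0) → x = 0) : Submodule.span K (Set.range w) = ⊤ := by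
  classical
  by_contra hne
  obtain ⟨f, hf0, hf⟩ := Submodule.exists_le_ker_of_lt_top _ (lt_top_iff_ne_top.mpr hne)
  obtain ⟨x, rfl⟩ := (dotProductEquiv K N).surjective f
  refine hf0 ((map_eq_zero_iff _ (dotProductEquiv K N).injective).mpr (hw x fun i => ?_))
  rw [dotProduct_comm]
  exact hf (Submodule.subset_span ⟨i, rfl⟩)

theorem exists_isSymm_mulVec_eq {ι : Type*} {w v : ι → N → K}
    (hw : Submodule.span K (Set.range w) = ⊤) (hwv : ∀ i j, w i ⬝ᵥ v j = v i ⬝ᵥ w j) :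
    ∃ P : Matrix N N K, P.IsSymm ∧ ∀ i, P *ᵥ w i = v i := by
  classical
  let W := Finsupp.linearCombination K w
  let V := Finsupp.linearCombination K v
  have hWV : ∀ f g, W f ⬝ᵥ V g = V f ⬝ᵥ W g := fun f g => by
    simp only [W, V, Finsupp.linearCombination_apply, Finsupp.sum, sum_dotProduct, dotProduct_sum,
      smul_dotProduct, dotProduct_smul, hwv]
  have hW : LinearMap.range W = ⊤ := (Finsupp.range_linearCombination K).trans hw
  have hWsurj : Function.Surjective W := LinearMap.range_eq_top.mp hW
  obtain ⟨s, hs⟩ := LinearMap.exists_rightInverse_of_surjective W hW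
  let P := LinearMap.toMatrix' (V ∘ₗ s)
  have hP : ∀ g, P *ᵥ W g = V g := fun g => by
    refine dotProduct_eq _ _ fun x => ?_
    obtain ⟨f, rfl⟩ := hWsurj x
    have hsW : W (s (W g)) = W g := LinearMap.congr_fun hs (W g)
    rw [LinearMap.toMatrix'_mulVec, LinearMap.comp_apply, ← hWV, hsW, hWV]
  refine ⟨P, ?_, fun i => by simpa [W, V] using hP (Finsupp.single i 1)⟩
  refine mulVec_injective (funext fun x => dotProduct_eq _ _ fun y => ?_)
  obtain ⟨f, rfl⟩ := hWsurj x
  obtain ⟨g, rfl⟩ := hWsurj y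
  rw [mulVec_transpose, ← dotProduct_mulVec, hP, hP, hWV]

theorem matrix_rank_eq_zero_iff {A : Matrix M N K} : A.rank = 0 ↔ A = 0 := by
  refine ⟨fun h => mulVec_injective (funext fun x => ?_), fun h => by rw [h, rank_zero]⟩
  have hrange : LinearMap.range A.mulVecLin = ⊥ := Submodule.finrank_eq_zero.mp h
  rw [zero_mulVec]
  exact LinearMap.congr_fun (LinearMap.range_eq_bot.mp hrange) x

theorem rank_fromBlocks_zero_zero [Fintype M] (A : Matrix N N K) (D : Matrix M M K) :
    (fromBlocks A 0 0 D).rank = A.rank + D.rank := by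
  let e := LinearEquiv.sumArrowLequivProdArrow N M K K
  have hconj : (fromBlocks A 0 0 D).mulVecLin =
      e.symm.toLinearMap ∘ₗ (A.mulVecLin.prodMap D.mulVecLin) ∘ₗ e.toLinearMap := by
    refine LinearMap.ext fun v => ?_
    rw [mulVecLin_apply, fromBlocks_mulVec, zero_mulVec, zero_mulVec, add_zero, zero_add]
    exact funext fun i => i.casesOn (fun _ => rfl) fun _ => rfl
  let ι := (LinearMap.range A.mulVecLin).subtype.prodMap (LinearMap.range D.mulVecLin).subtype
  have hι : LinearMap.range (A.mulVecLin.prodMap D.mulVecLin) = LinearMap.range ι := by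
    simp only [ι, LinearMap.range_prodMap, Submodule.range_subtype]
  have hinj : Function.Injective ι :=
    Function.Injective.prodMap Subtype.val_injective Subtype.val_injective
  rw [Matrix.rank, hconj, LinearMap.range_comp, LinearEquiv.range_comp, LinearEquiv.finrank_map_eq,
    hι, LinearMap.finrank_range_of_inj hinj, Module.finrank_prod, Matrix.rank, Matrix.rank]

theorem rank_fromBlocks_one [Fintype M] [DecidableEq M]
    (S : Matrix N N K) (L : Matrix N M K) (J : Matrix M N K) :
    (fromBlocks S L J 1).rank = (S - L * J).rank + Fintype.card M := by
  classical
  let _ : Invertible (1 : Matrix M M K) := invertibleOne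
  rw [fromBlocks_eq_of_invertible₂₂, invOf_one, Matrix.mul_one, Matrix.one_mul,
    rank_mul_eq_left_of_isUnit_det, rank_mul_eq_right_of_isUnit_det, rank_fromBlocks_zero_zero,
    rank_one] <;> simp

theorem semiconjBy_aeval {R S : Type*} [CommSemiring R] [Semiring S] [Algebra R S] {a x y : S}
    (h : SemiconjBy a x y) (p : Polynomial R) :
    SemiconjBy a (Polynomial.aeval x p) (Polynomial.aeval y p) := by
  induction p using Polynomial.induction_on' with
  | add p q hp hq => simpa only [map_add] using hp.add_right hq
  | monomial j r =>
    have hr : SemiconjBy a (algebraMap R S r) (algebraMap R S r) := (Algebra.commutes r a).symm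
    simpa only [Polynomial.aeval_monomial] using hr.mul_right (h.pow_right j)

theorem aeval_transpose {R : Type*} [CommRing R] [DecidableEq N] (A : Matrix N N R)
    (p : Polynomial R) : Polynomial.aeval Aᵀ p = (Polynomial.aeval A p)ᵀ := by
  induction p using Polynomial.induction_on' with
  | add p q hp hq => simp only [map_add, transpose_add, hp, hq]
  | monomial j r =>
    simp only [Polynomial.aeval_monomial, Algebra.algebraMap_eq_smul_one, smul_one_mul,
      transpose_smul, transpose_pow]

end LinearAlgebra

section Riccati

open Polynomial (X aeval aeval_X aeval_comp)

variable {K N M κ : Type*} [Field K] [Fintype N] [Fintype κ]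

/-- Controllability of the pair `(F, G)` in its dual, basis-free form: no nonzero `Fᵀ`-invariant
subspace is annihilated by `Gᵀ`. Unlike the rank condition on `G, FG, F²G, …`, it passes to
quotients and to functions of `F` without computation. -/
def IsControllable (F : Matrix N N K) (G : Matrix N M K) : Prop :=
  ∀ U : Submodule K (N → K), (∀ v ∈ U, Fᵀ *ᵥ v ∈ U) → (∀ v ∈ U, Gᵀ *ᵥ v = 0) → U = ⊥

theorem IsControllable.of_intertwine [DecidableEq κ] {F : Matrix N N K} {G : Matrix N M K}
    (h : IsControllable F G) {F' : Matrix κ κ K} {π : Matrix κ N K} {σ : Matrix N κ K}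
    (hπσ : π * σ = 1) (hπ : π * F = F' * π) : IsControllable F' (π * G) := by
  intro U hF hG
  have hinj : Function.Injective πᵀ.mulVecLin := by
    refine Function.LeftInverse.injective (g := σᵀ.mulVecLin) fun v => ?_
    rw [mulVecLin_apply, mulVecLin_apply, mulVec_mulVec, ← transpose_mul, hπσ, transpose_one,
      one_mulVec]
  refine Submodule.map_injective_of_injective hinj ((h _ ?_ ?_).trans (Submodule.map_bot _).symm)
  · rintro _ ⟨v, hv, rfl⟩
    refine ⟨F'ᵀ *ᵥ v, hF v hv, ?_⟩
    rw [mulVecLin_apply, mulVecLin_apply, mulVec_mulVec, mulVec_mulVec, ← transpose_mul,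
      ← transpose_mul, hπ]
  · rintro _ ⟨v, hv, rfl⟩
    rw [mulVecLin_apply, mulVec_mulVec, ← transpose_mul, hG v hv]

theorem isUnit_of_lyapunov [LinearOrder K] [IsStrictOrderedRing K] [DecidableEq N] [Fintype M]
    {F P : Matrix N N K} {G : Matrix N M K} (h : IsControllable F G) (hPsymm : P.IsSymm)
    (hP : F * P + P * Fᵀ = G * Gᵀ) : IsUnit P := by
  have hG : ∀ v, P *ᵥ v = 0 → Gᵀ *ᵥ v = 0 := by
    intro v hv
    have hvP : v ᵥ* P = 0 := by rw [← mulVec_transpose, hPsymm.eq, hv]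
    rw [← dotProduct_self_eq_zero]
    calc (Gᵀ *ᵥ v) ⬝ᵥ (Gᵀ *ᵥ v) = v ⬝ᵥ ((G * Gᵀ) *ᵥ v) := by
          rw [← mulVec_mulVec, dotProduct_mulVec v, mulVec_transpose]
      _ = v ⬝ᵥ (F *ᵥ (P *ᵥ v)) + (v ᵥ* P) ⬝ᵥ (Fᵀ *ᵥ v) := by
          rw [← hP, add_mulVec, dotProduct_add, ← mulVec_mulVec, ← mulVec_mulVec,
            dotProduct_mulVec v P]
      _ = 0 := by rw [hv, hvP, mulVec_zero, dotProduct_zero, zero_dotProduct, add_zero]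
  have hF : ∀ v, P *ᵥ v = 0 → P *ᵥ (Fᵀ *ᵥ v) = 0 := by
    intro v hv
    have hPv := congrArg (· *ᵥ v) hP
    simpa only [add_mulVec, ← mulVec_mulVec, hv, hG v hv, mulVec_zero, zero_add] using hPv
  rw [← mulVec_injective_iff_isUnit]
  exact LinearMap.ker_eq_bot.mp (h (LinearMap.ker P.mulVecLin) hF hG)

/-- The residual of the (continuous-time, homogeneous) algebraic Riccati equation
`FᵀQ + QF = QSQ`. -/
def riccatiResidual (F S Q : Matrix N N K) : Matrix N N K :=
  Fᵀ * Q + Q * F - Q * S * Q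

theorem mulVec_mem_ker_of_riccatiResidual_eq_zero {F S Q : Matrix N N K}
    (hQ : riccatiResidual F S Q = 0) :
    ∀ v ∈ LinearMap.ker Q.mulVecLin, F *ᵥ v ∈ LinearMap.ker Q.mulVecLin := by
  intro v (hv : Q *ᵥ v = 0)
  rw [LinearMap.mem_ker, mulVecLin_apply]
  have hQv := congrArg (· *ᵥ v) hQ
  simpa only [riccatiResidual, sub_mulVec, add_mulVec, ← mulVec_mulVec, hv, mulVec_zero, zero_add,
    sub_zero, zero_mulVec] using hQv

theorem riccatiResidual_inv_eq_zero [DecidableEq N] {F S P : Matrix N N K} (hPunit : IsUnit P)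
    (hP : F * P + P * Fᵀ = S) : riccatiResidual F S P⁻¹ = 0 := by
  have hdet := (isUnit_iff_isUnit_det P).mp hPunit
  rw [riccatiResidual, ← hP, Matrix.mul_add, Matrix.add_mul, ← Matrix.mul_assoc P⁻¹ P,
    nonsing_inv_mul P hdet, Matrix.one_mul, ← Matrix.mul_assoc P⁻¹ F,
    mul_nonsing_inv_cancel_right _ _ hdet, add_comm, sub_self]

theorem riccatiResidual_transpose_mul_mul {F S : Matrix N N K} {F' : Matrix κ κ K}
    {π : Matrix κ N K} (hπ : π * F = F' * π) (Q : Matrix κ κ K) :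
    riccatiResidual F S (πᵀ * Q * π) = πᵀ * riccatiResidual F' (π * S * πᵀ) Q * π := by
  have hπT : Fᵀ * πᵀ = πᵀ * F'ᵀ := by rw [← transpose_mul, hπ, transpose_mul]
  calc riccatiResidual F S (πᵀ * Q * π)
      = Fᵀ * πᵀ * Q * π + πᵀ * Q * (π * F) - πᵀ * (Q * (π * S * πᵀ) * Q) * π := by
        simp only [riccatiResidual, Matrix.mul_assoc]
    _ = πᵀ * riccatiResidual F' (π * S * πᵀ) Q * π := by
        rw [hπT, hπ, riccatiResidual]
        simp only [Matrix.mul_sub, Matrix.sub_mul, Matrix.mul_add, Matrix.add_mul, Matrix.mul_assoc]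

theorem ker_transpose_mul_mul [DecidableEq κ] {π : Matrix κ N K} {σ : Matrix N κ K}
    (hπσ : π * σ = 1) {Q : Matrix κ κ K} (hQ : IsUnit Q) :
    LinearMap.ker (πᵀ * Q * π).mulVecLin = LinearMap.ker π.mulVecLin := by
  have hdet := (isUnit_iff_isUnit_det Q).mp hQ
  refine le_antisymm (fun v (hv : (πᵀ * Q * π) *ᵥ v = 0) => ?_) fun v (hv : π *ᵥ v = 0) => ?_
  · have hσπ : σᵀ * πᵀ = 1 := by rw [← transpose_mul, hπσ, transpose_one]
    have hπv : π = Q⁻¹ * σᵀ * (πᵀ * Q * π) := by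
      rw [Matrix.mul_assoc, Matrix.mul_assoc πᵀ, ← Matrix.mul_assoc σᵀ, hσπ, Matrix.one_mul,
        nonsing_inv_mul_cancel_left _ _ hdet]
    rw [LinearMap.mem_ker, mulVecLin_apply, hπv, ← mulVec_mulVec, hv, mulVec_zero]
  · rw [LinearMap.mem_ker, mulVecLin_apply, ← mulVec_mulVec, hv, mulVec_zero]

theorem lyapunov_of_intertwine {F P S : Matrix N N K} {F' : Matrix κ κ K} {π : Matrix κ N K}
    (hπ : π * F = F' * π) (hP : F * P + P * Fᵀ = S) :
    F' * (π * P * πᵀ) + (π * P * πᵀ) * F'ᵀ = π * S * πᵀ := by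
  have hπT : Fᵀ * πᵀ = πᵀ * F'ᵀ := by rw [← transpose_mul, hπ, transpose_mul]
  rw [← hP, Matrix.mul_add, Matrix.add_mul, ← Matrix.mul_assoc π F, hπ]
  simp only [Matrix.mul_assoc, hπT]

theorem exists_isSymm_riccatiResidual_eq_zero [LinearOrder K] [IsStrictOrderedRing K] [Fintype M]
    {F P : Matrix N N K} {G : Matrix N M K} (h : IsControllable F G) (hPsymm : P.IsSymm)
    (hP : F * P + P * Fᵀ = G * Gᵀ) {X : Submodule K (N → K)} (hX : ∀ v ∈ X, F *ᵥ v ∈ X) :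
    ∃ Q : Matrix N N K,
      Q.IsSymm ∧ riccatiResidual F (G * Gᵀ) Q = 0 ∧ LinearMap.ker Q.mulVecLin = X := by
  obtain ⟨k, π, σ, hπσ, rfl⟩ := exists_mul_eq_one_and_ker_eq X
  have hπ : π * F = (π * F * σ) * π :=
    eq_mul_mul_of_ker_le hπσ fun v hv => by
      rw [LinearMap.mem_ker, mulVecLin_apply, ← mulVec_mulVec]
      exact hX v hv
  have hπG : π * (G * Gᵀ) * πᵀ = (π * G) * (π * G)ᵀ := by
    simp only [transpose_mul, Matrix.mul_assoc]
  have hπP := lyapunov_of_intertwine hπ hP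
  have hπPsymm : (π * P * πᵀ)ᵀ = π * P * πᵀ := by
    simp only [transpose_mul, transpose_transpose, hPsymm.eq, Matrix.mul_assoc]
  have hunit : IsUnit (π * P * πᵀ) :=
    isUnit_of_lyapunov (h.of_intertwine hπσ hπ) hπPsymm (hπP.trans hπG)
  refine ⟨πᵀ * (π * P * πᵀ)⁻¹ * π, ?_, ?_,
    ker_transpose_mul_mul hπσ (isUnit_nonsing_inv_iff.mpr hunit)⟩
  · rw [IsSymm, transpose_mul, transpose_mul, transpose_transpose, transpose_nonsing_inv, hπPsymm,
      ← Matrix.mul_assoc]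
  · rw [riccatiResidual_transpose_mul_mul hπ, riccatiResidual_inv_eq_zero hunit hπP,
      Matrix.mul_zero, Matrix.zero_mul]

theorem semiconjBy_of_riccatiResidual_eq_zero {F S Q : Matrix N N K}
    (hQ : riccatiResidual F S Q = 0) : SemiconjBy Q (S * Q - F) Fᵀ := by
  rw [riccatiResidual, sub_eq_zero] at hQ
  rw [SemiconjBy, Matrix.mul_sub, ← Matrix.mul_assoc, ← hQ, add_sub_cancel_right]

theorem mul_aeval_charpoly_eq_zero_of_riccatiResidual_eq_zero [DecidableEq N]
    {F S Q : Matrix N N K} (hQ : riccatiResidual F S Q = 0) :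
    Q * aeval (S * Q - F) F.charpoly = 0 := by
  rw [(semiconjBy_aeval (semiconjBy_of_riccatiResidual_eq_zero hQ) _).eq, aeval_transpose,
    aeval_self_charpoly, transpose_zero, Matrix.zero_mul]

theorem semiconjBy_sub_of_riccatiResidual_eq_zero {F S Q₁ Q₂ : Matrix N N K} (hS : S.IsSymm)
    (hsymm₁ : Q₁.IsSymm) (hQ₁ : riccatiResidual F S Q₁ = 0) (hQ₂ : riccatiResidual F S Q₂ = 0) :
    SemiconjBy (Q₁ - Q₂) (S * Q₂ - F) (-(S * Q₁ - F)ᵀ) := by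
  have h₁ := (semiconjBy_of_riccatiResidual_eq_zero hQ₁).eq
  have h₂ := (semiconjBy_of_riccatiResidual_eq_zero hQ₂).eq
  have hT : (S * Q₁ - F)ᵀ = Q₁ * S - Fᵀ := by
    rw [transpose_sub, transpose_mul, hS.eq, hsymm₁.eq]
  rw [Matrix.mul_sub, sub_eq_iff_eq_add, ← Matrix.mul_assoc] at h₁ h₂
  rw [SemiconjBy, hT]
  simp only [Matrix.mul_sub, Matrix.sub_mul, Matrix.neg_mul, ← Matrix.mul_assoc, h₁, h₂]
  abel

theorem eq_of_riccatiResidual_eq_zero_of_ker_eq [DecidableEq N] {F S Q₁ Q₂ : Matrix N N K}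
    (hF : IsCoprime F.charpoly (F.charpoly.comp (-X))) (hS : S.IsSymm)
    (hsymm₁ : Q₁.IsSymm) (hsymm₂ : Q₂.IsSymm)
    (hQ₁ : riccatiResidual F S Q₁ = 0) (hQ₂ : riccatiResidual F S Q₂ = 0)
    (hker : LinearMap.ker Q₁.mulVecLin = LinearMap.ker Q₂.mulVecLin) : Q₁ = Q₂ := by
  set H₁ := S * Q₁ - F
  set H₂ := S * Q₂ - F
  have hΔsymm : (Q₁ - Q₂)ᵀ = Q₁ - Q₂ := by rw [transpose_sub, hsymm₁.eq, hsymm₂.eq]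
  have hΔ₁ : (Q₁ - Q₂) * aeval H₁ F.charpoly = 0 := by
    have h₁ := mul_aeval_charpoly_eq_zero_of_riccatiResidual_eq_zero hQ₁
    rw [Matrix.sub_mul, h₁, mul_eq_zero_of_ker_le hker.le h₁, sub_zero]
  have hΔ₂ : (Q₁ - Q₂) * aeval H₂ F.charpoly = 0 := by
    have h₂ := mul_aeval_charpoly_eq_zero_of_riccatiResidual_eq_zero hQ₂
    rw [Matrix.sub_mul, h₂, mul_eq_zero_of_ker_le hker.ge h₂, sub_zero]
  have hΔcomp : (Q₁ - Q₂) * aeval H₂ (F.charpoly.comp (-X)) = 0 := by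
    have hsemiconj := semiconjBy_sub_of_riccatiResidual_eq_zero hS hsymm₁ hQ₁ hQ₂
    rw [(semiconjBy_aeval hsemiconj _).eq, aeval_comp, map_neg, aeval_X, neg_neg, aeval_transpose]
    rw [← hΔsymm, ← transpose_mul, hΔ₁, transpose_zero]
  obtain ⟨a, b, hab⟩ := hF
  have hone :
      aeval H₂ F.charpoly * aeval H₂ a + aeval H₂ (F.charpoly.comp (-X)) * aeval H₂ b = 1 := by
    rw [← map_mul, ← map_mul, ← map_add, mul_comm _ a, mul_comm _ b, hab, map_one]
  rw [← sub_eq_zero, ← Matrix.mul_one (Q₁ - Q₂), ← hone, Matrix.mul_add, ← Matrix.mul_assoc,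
    ← Matrix.mul_assoc, hΔ₂, hΔcomp, Matrix.zero_mul, Matrix.zero_mul, add_zero]

end Riccati

section Cayley

variable {K N M : Type*} [Field K] [Fintype N] [DecidableEq N]

/-- The Cayley transform `(A - 1)⁻¹ + 1/2` of a matrix, which turns Stein equations
`A P Aᵀ - P = S` into Lyapunov equations. It equals half of the more usual `(A - 1)⁻¹(A + 1)` and is
meaningful only if `A - 1` is invertible. -/
def cayley (A : Matrix N N K) : Matrix N N K :=
  (A - 1)⁻¹ + (2⁻¹ : K) • 1

theorem cayley_mulVec_mem_iff {A : Matrix N N K} (hA : IsUnit (A - 1)) {X : Submodule K (N → K)} :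
    (∀ v ∈ X, cayley A *ᵥ v ∈ X) ↔ ∀ v ∈ X, A *ᵥ v ∈ X := by
  have hdet := (isUnit_iff_isUnit_det _).mp hA
  have hsmul (v) : ((2⁻¹ : K) • (1 : Matrix N N K)) *ᵥ v = (2⁻¹ : K) • v := by
    rw [smul_mulVec, one_mulVec]
  constructor
  · intro hX
    have hinv : ∀ v ∈ X, (A - 1)⁻¹ *ᵥ v ∈ X := by
      intro v hv
      have hmem := X.sub_mem (hX v hv) (X.smul_mem 2⁻¹ hv)
      rwa [cayley, add_mulVec, hsmul, add_sub_cancel_right] at hmem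
    have hsub := inv_mulVec_mem (isUnit_nonsing_inv_iff.mpr hA) hinv
    rw [nonsing_inv_nonsing_inv _ hdet] at hsub
    intro v hv
    have hmem := X.add_mem (hsub v hv) hv
    rwa [sub_mulVec, one_mulVec, sub_add_cancel] at hmem
  · intro hX v hv
    have hsub : ∀ v ∈ X, (A - 1) *ᵥ v ∈ X := by
      intro v hv
      rw [sub_mulVec, one_mulVec]
      exact X.sub_mem (hX v hv) hv
    rw [cayley, add_mulVec, hsmul]
    exact X.add_mem (inv_mulVec_mem hA hsub v hv) (X.smul_mem _ hv)

theorem transpose_cayley (A : Matrix N N K) : (cayley A)ᵀ = cayley Aᵀ := by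
  rw [cayley, cayley, transpose_add, transpose_nonsing_inv, transpose_sub, transpose_smul,
    transpose_one]

theorem add_half_mul_add_mul_add_half [NeZero (2 : K)] (R R' P : Matrix N N K) :
    (R + (2⁻¹ : K) • 1) * P + P * (R' + (2⁻¹ : K) • 1) = R * P + P * R' + P := by
  have hhalf : (2⁻¹ : K) • P + (2⁻¹ : K) • P = P := by
    rw [← two_smul K, smul_inv_smul₀ two_ne_zero]
  rw [Matrix.add_mul, Matrix.mul_add, Matrix.smul_mul, Matrix.mul_smul, Matrix.one_mul,
    Matrix.mul_one, add_add_add_comm, hhalf]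

theorem IsControllable.cayley {A : Matrix N N K} {B : Matrix N M K} (h : IsControllable A B)
    (hA : IsUnit (A - 1)) : IsControllable (cayley A) ((A - 1)⁻¹ * B) := by
  intro U hF hG
  have hAT : IsUnit (Aᵀ - 1) := by
    rw [← transpose_one, ← transpose_sub, isUnit_transpose]
    exact hA
  rw [transpose_cayley] at hF
  have hU : ∀ v ∈ U, Aᵀ *ᵥ v ∈ U := (cayley_mulVec_mem_iff hAT).mp hF
  refine h U hU fun v hv => ?_
  have hsub : (A - 1)ᵀ *ᵥ v ∈ U := by
    rw [transpose_sub, transpose_one, sub_mulVec, one_mulVec]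
    exact U.sub_mem (hU v hv) hv
  have hBv := hG _ hsub
  rwa [mulVec_mulVec, ← transpose_mul,
    mul_nonsing_inv_cancel_left _ _ ((isUnit_iff_isUnit_det _).mp hA)] at hBv

theorem cayley_lyapunov_of_stein [NeZero (2 : K)] {A P S : Matrix N N K} (hA : IsUnit (A - 1))
    (hP : A * P * Aᵀ - P = S) :
    cayley A * P + P * (cayley A)ᵀ = (A - 1)⁻¹ * S * (A - 1)⁻¹ᵀ := by
  set R := (A - 1)⁻¹
  have hRA : R * A = R + 1 := by
    have hcancel : R * (A - 1) = 1 := nonsing_inv_mul _ ((isUnit_iff_isUnit_det _).mp hA)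
    rwa [Matrix.mul_sub, Matrix.mul_one, sub_eq_iff_eq_add'] at hcancel
  have hART : Aᵀ * Rᵀ = Rᵀ + 1 := by
    rw [← transpose_mul, hRA, transpose_add, transpose_one]
  calc cayley A * P + P * (cayley A)ᵀ = R * P + P * Rᵀ + P := by
        rw [cayley, transpose_add, transpose_smul, transpose_one, add_half_mul_add_mul_add_half]
    _ = (R + 1) * P * (Rᵀ + 1) - R * P * Rᵀ := by noncomm_ring
    _ = R * (A * P * Aᵀ - P) * Rᵀ := by
        rw [← hRA, ← hART]
        simp only [Matrix.mul_sub, Matrix.sub_mul, Matrix.mul_assoc]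
    _ = R * S * Rᵀ := by rw [hP]

theorem IsControllable.isUnit_sub_one_of_stein [LinearOrder K] [IsStrictOrderedRing K] [Fintype M]
    {A P : Matrix N N K} {B : Matrix N M K} (h : IsControllable A B)
    (hP : A * P * Aᵀ - P = B * Bᵀ) : IsUnit (A - 1) := by
  have hfix : ∀ v, Aᵀ *ᵥ v = v → Bᵀ *ᵥ v = 0 := by
    intro v hv
    have hvA : v ᵥ* A = v := by rw [← mulVec_transpose, hv]
    rw [← dotProduct_self_eq_zero]
    calc (Bᵀ *ᵥ v) ⬝ᵥ (Bᵀ *ᵥ v) = v ⬝ᵥ ((B * Bᵀ) *ᵥ v) := by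
          rw [← mulVec_mulVec, dotProduct_mulVec v, mulVec_transpose]
      _ = (v ᵥ* A) ⬝ᵥ (P *ᵥ (Aᵀ *ᵥ v)) - v ⬝ᵥ (P *ᵥ v) := by
          rw [← hP, sub_mulVec, dotProduct_sub, ← dotProduct_mulVec, mulVec_mulVec, mulVec_mulVec,
            Matrix.mul_assoc]
      _ = 0 := by rw [hvA, hv, sub_self]
  have hmem : ∀ v ∈ LinearMap.ker (Aᵀ - 1).mulVecLin, Aᵀ *ᵥ v = v := by
    intro v (hv : (Aᵀ - 1) *ᵥ v = 0)
    rwa [sub_mulVec, one_mulVec, sub_eq_zero] at hv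
  have hker : LinearMap.ker (Aᵀ - 1).mulVecLin = ⊥ :=
    h _ (fun v hv => (hmem v hv).symm ▸ hv) fun v hv => hfix v (hmem v hv)
  rw [← isUnit_transpose, transpose_sub, transpose_one, ← mulVec_injective_iff_isUnit]
  exact LinearMap.ker_eq_bot.mp hker

theorem Reachable.isControllable [Fintype M] {A : Matrix N N ℝ} {B : Matrix N M ℝ}
    (h : Reachable A B) : IsControllable A B := by
  intro U hA hB
  have hpow : ∀ k, ∀ v ∈ U, (Aᵀ ^ k) *ᵥ v ∈ U := by
    intro k
    induction k with
    | zero => simp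
    | succ k ih =>
      intro v hv
      rw [pow_succ, ← mulVec_mulVec]
      exact ih _ (hA v hv)
  rw [Submodule.eq_bot_iff]
  intro v hv
  suffices hle : Submodule.span ℝ _ ≤ LinearMap.ker (dotProductEquiv ℝ N v) from
    dotProduct_self_eq_zero.mp (hle (h.ge Submodule.mem_top))
  rw [Submodule.span_le]
  rintro _ ⟨k, -, j, rfl⟩
  have hj : (Bᵀ *ᵥ ((Aᵀ ^ k) *ᵥ v)) j = 0 := congrFun (hB _ (hpow k v hv)) j
  rw [SetLike.mem_coe, LinearMap.mem_ker, dotProductEquiv_apply_apply, dotProduct_mulVec,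
    ← mulVec_transpose, transpose_pow, dotProduct_comm]
  exact hj

theorem map_cayley {L : Type*} [Field L] (f : K →+* L) {A : Matrix N N K} (hA : IsUnit (A - 1)) :
    (cayley A).map f = cayley (A.map f) := by
  have hinv : f.mapMatrix (A - 1)⁻¹ = (f.mapMatrix (A - 1))⁻¹ := by
    refine (inv_eq_left_inv ?_).symm
    rw [← map_mul, nonsing_inv_mul _ ((isUnit_iff_isUnit_det _).mp hA), map_one]
  have hhalf : f.mapMatrix ((2⁻¹ : K) • 1 : Matrix N N K) = (2⁻¹ : L) • 1 := by
    ext i j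
    simp [one_apply, apply_ite f, map_ofNat f 2]
  rw [map_sub, map_one] at hinv
  change f.mapMatrix ((A - 1)⁻¹ + (2⁻¹ : K) • 1) = _
  rw [map_add, hinv, hhalf]
  rfl

theorem mem_spectrum_of_mem_spectrum_cayley {A : Matrix N N K} (hA : IsUnit (A - 1)) {l : K}
    (hl : l ∈ spectrum K (cayley A)) : l - 2⁻¹ ≠ 0 ∧ 1 + (l - 2⁻¹)⁻¹ ∈ spectrum K A := by
  obtain ⟨u, hu⟩ := hA
  have hinv : l - 2⁻¹ ∈ spectrum K (↑u⁻¹ : Matrix N N K) := by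
    rw [← spectrum.add_mem_add_iff (s := 2⁻¹), sub_add_cancel, coe_units_inv, hu, add_comm,
      Algebra.algebraMap_eq_smul_one]
    exact hl
  refine ⟨spectrum.ne_zero_of_mem_of_unit hinv, ?_⟩
  rw [add_comm, ← sub_add_cancel A 1, ← hu, add_comm (u : Matrix N N K),
    ← map_one (algebraMap K (Matrix N N K)), spectrum.add_mem_add_iff, ← spectrum.inv₀_mem_inv_iff,
    inv_inv]
  exact hinv

theorem isCoprime_charpoly_cayley (L : Type*) [Field L] [IsAlgClosed L] [NeZero (2 : L)]
    [Algebra K L] {A : Matrix N N K} (hA : IsUnit (A - 1))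
    (h : ∀ l m : L, l ∈ spectrum L (A.map (algebraMap K L)) →
      m ∈ spectrum L (A.map (algebraMap K L)) → l * m ≠ 1) :
    IsCoprime (cayley A).charpoly ((cayley A).charpoly.comp (-Polynomial.X)) := by
  set f := algebraMap K L
  have hAL : IsUnit (A.map f - 1) := by
    have hmap := hA.map f.mapMatrix
    rwa [map_sub, map_one] at hmap
  have hspec : ∀ l : L, Polynomial.aeval l (cayley A).charpoly = 0 →
      l ∈ spectrum L (cayley (A.map f)) := by
    intro l hl
    rwa [mem_spectrum_iff_isRoot_charpoly, ← map_cayley f hA, charpoly_map, Polynomial.IsRoot,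
      Polynomial.eval_map_algebraMap]
  rw [Polynomial.isCoprime_iff_aeval_ne_zero_of_isAlgClosed K L]
  by_contra! hroot
  obtain ⟨l, hl, hlneg⟩ := hroot
  rw [Polynomial.aeval_comp, map_neg, Polynomial.aeval_X] at hlneg
  obtain ⟨hne, hmem⟩ := mem_spectrum_of_mem_spectrum_cayley hAL (hspec l hl)
  obtain ⟨hne', hmem'⟩ := mem_spectrum_of_mem_spectrum_cayley hAL (hspec (-l) hlneg)
  have hsum : (l - 2⁻¹) + (-l - 2⁻¹) = -1 := by
    field_simp
    ring
  refine h _ _ hmem hmem' ?_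
  generalize l - 2⁻¹ = a, -l - 2⁻¹ = b at *
  field_simp
  linear_combination hsum

end Cayley

section LinearMatrixInequality

variable {K N M : Type*} [Field K] [Fintype N] [DecidableEq M]

/-- The matrix `N(Q)` of the constrained linear matrix inequality `N(Q) ⪰ 0`, `rank N(Q) = m`. -/
def clmiMatrix (A : Matrix N N K) (B : Matrix N M K) (Q : Matrix N N K) :
    Matrix (N ⊕ M) (N ⊕ M) K :=
  fromBlocks (Aᵀ * Q * A - Q) (Aᵀ * Q * B) (Bᵀ * Q * A) (Bᵀ * Q * B + 1)

theorem clmiMatrix_eq_add (A : Matrix N N K) (B : Matrix N M K) (Q : Matrix N N K) :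
    clmiMatrix A B Q = (fromCols A B)ᵀ * Q * fromCols A B + fromBlocks (-Q) 0 0 1 := by
  rw [transpose_fromCols, fromRows_mul, fromRows_mul_fromCols, fromBlocks_add, clmiMatrix,
    sub_eq_add_neg, add_zero, add_zero]

variable [DecidableEq N] [Fintype M]

/-- The change of basis that carries `N(Q)` to a block matrix whose Schur complement is the residual
of a Riccati equation for the Cayley transform of `A`. -/
def cayleyCongruence (A : Matrix N N K) (B : Matrix N M K) : Matrix (N ⊕ M) (N ⊕ M) K :=
  fromBlocks (A - 1)⁻¹ (-((A - 1)⁻¹ * B)) 0 1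

theorem isUnit_cayleyCongruence {A : Matrix N N K} (hA : IsUnit (A - 1)) (B : Matrix N M K) :
    IsUnit (cayleyCongruence A B) :=
  isUnit_fromBlocks_zero₂₁.mpr ⟨isUnit_nonsing_inv_iff.mpr hA, isUnit_one⟩

theorem fromCols_mul_cayleyCongruence {A : Matrix N N K} (hA : IsUnit (A - 1)) (B : Matrix N M K) :
    fromCols A B * cayleyCongruence A B = fromCols ((A - 1)⁻¹ + 1) (-((A - 1)⁻¹ * B)) := by
  have hAinv : A * (A - 1)⁻¹ = (A - 1)⁻¹ + 1 := by
    have hcancel := mul_nonsing_inv _ ((isUnit_iff_isUnit_det _).mp hA)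
    rwa [Matrix.sub_mul, Matrix.one_mul, sub_eq_iff_eq_add'] at hcancel
  rw [cayleyCongruence, fromCols_mul_fromBlocks, Matrix.mul_neg, ← Matrix.mul_assoc, hAinv,
    Matrix.mul_zero, add_zero, Matrix.mul_one, Matrix.add_mul, Matrix.one_mul, neg_add,
    neg_add_cancel_right]

theorem transpose_cayleyCongruence_mul_clmiMatrix_mul [NeZero (2 : K)] {A : Matrix N N K}
    (hA : IsUnit (A - 1)) (B : Matrix N M K) (Q : Matrix N N K) :
    (cayleyCongruence A B)ᵀ * clmiMatrix A B Q * cayleyCongruence A B =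
      fromBlocks ((cayley A)ᵀ * Q + Q * cayley A) (-(Q * ((A - 1)⁻¹ * B)))
        (-(((A - 1)⁻¹ * B)ᵀ * Q)) 1 := by
  have hcols := fromCols_mul_cayleyCongruence hA B
  set T := cayleyCongruence A B with hT
  set R := (A - 1)⁻¹ with hR
  have hcayley : (cayley A)ᵀ * Q + Q * cayley A = Rᵀ * Q + Q * R + Q := by
    rw [cayley, transpose_add, transpose_smul, transpose_one, add_half_mul_add_mul_add_half]
  calc Tᵀ * clmiMatrix A B Q * T
      = (fromCols A B * T)ᵀ * Q * (fromCols A B * T) + Tᵀ * fromBlocks (-Q) 0 0 1 * T := by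
        simp only [clmiMatrix_eq_add, Matrix.mul_add, Matrix.add_mul, transpose_mul,
          Matrix.mul_assoc]
    _ = _ := by
        rw [hcols, hcayley, hT, cayleyCongruence, ← hR, fromBlocks_transpose, transpose_fromCols,
          fromRows_mul, fromRows_mul_fromCols, fromBlocks_multiply, fromBlocks_multiply,
          fromBlocks_add]
        congr 1
        · simp only [Matrix.add_mul, Matrix.mul_add, Matrix.mul_assoc, Matrix.mul_neg,
            Matrix.neg_mul, Matrix.one_mul, Matrix.mul_one, transpose_add, transpose_one,
            Matrix.mul_zero, transpose_zero, add_zero]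
          abel
        all_goals simp [Matrix.add_mul, Matrix.mul_add, Matrix.mul_assoc]

theorem rank_clmiMatrix [NeZero (2 : K)] {A : Matrix N N K} (hA : IsUnit (A - 1))
    (B : Matrix N M K) (Q : Matrix N N K) :
    (clmiMatrix A B Q).rank =
      (riccatiResidual (cayley A) (((A - 1)⁻¹ * B) * ((A - 1)⁻¹ * B)ᵀ) Q).rank +
        Fintype.card M := by
  have hT : IsUnit (cayleyCongruence A B).det :=
    (isUnit_iff_isUnit_det _).mp (isUnit_cayleyCongruence hA B)
  have hTT : IsUnit (cayleyCongruence A B)ᵀ.det := by rwa [det_transpose]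
  rw [← rank_mul_eq_right_of_isUnit_det _ (clmiMatrix A B Q) hTT,
    ← rank_mul_eq_left_of_isUnit_det _ _ hT, transpose_cayleyCongruence_mul_clmiMatrix_mul hA,
    rank_fromBlocks_one, riccatiResidual, Matrix.neg_mul, Matrix.mul_neg, neg_neg]
  simp only [Matrix.mul_assoc]

theorem rank_clmiMatrix_eq_card_iff [NeZero (2 : K)] {A : Matrix N N K} (hA : IsUnit (A - 1))
    (B : Matrix N M K) (Q : Matrix N N K) :
    (clmiMatrix A B Q).rank = Fintype.card M ↔
      riccatiResidual (cayley A) (((A - 1)⁻¹ * B) * ((A - 1)⁻¹ * B)ᵀ) Q = 0 := by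
  rw [rank_clmiMatrix hA, Nat.add_eq_right, matrix_rank_eq_zero_iff]

theorem posSemidef_clmiMatrix {A Q : Matrix N N ℝ} (hA : IsUnit (A - 1)) {B : Matrix N M ℝ}
    (hQsymm : Q.IsSymm)
    (hQ : riccatiResidual (cayley A) (((A - 1)⁻¹ * B) * ((A - 1)⁻¹ * B)ᵀ) Q = 0) :
    (clmiMatrix A B Q).PosSemidef := by
  set G := (A - 1)⁻¹ * B with hG
  have hlower : -(Gᵀ * Q) = (-(Q * G))ᴴ := by
    rw [conjTranspose_eq_transpose_of_trivial, transpose_neg, transpose_mul Q, hQsymm.eq]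
  have hschur :
      (cayley A)ᵀ * Q + Q * cayley A - -(Q * G) * (1 : Matrix M M ℝ)⁻¹ * (-(Q * G))ᴴ = 0 := by
    rw [← hlower, inv_one, Matrix.mul_one, Matrix.neg_mul, Matrix.mul_neg, neg_neg, ← hQ,
      riccatiResidual]
    simp only [Matrix.mul_assoc]
  rw [← (isUnit_cayleyCongruence hA B).posSemidef_star_left_conjugate_iff, star_eq_conjTranspose,
    conjTranspose_eq_transpose_of_trivial, transpose_cayleyCongruence_mul_clmiMatrix_mul hA, ← hG,
    hlower]
  let _ : Invertible (1 : Matrix M M ℝ) := invertibleOne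
  rw [PosDef.fromBlocks₂₂ _ _ PosDef.one, hschur]
  exact PosSemidef.zero

end LinearMatrixInequality

section Resolvent

variable {R S : Type*} [CommRing R] [Ring S] [Algebra R S] {a : S} {r s : R}

theorem resolvent_mul_self (hr : r ∈ resolventSet R a) :
    resolvent a r * a = r • resolvent a r - 1 := by
  have hcancel := Ring.inverse_mul_cancel _ hr
  rw [← resolvent, mul_sub, ← Algebra.commutes, ← Algebra.smul_def] at hcancel
  rw [← hcancel, sub_sub_cancel]

theorem self_mul_resolvent (hr : r ∈ resolventSet R a) :
    a * resolvent a r = r • resolvent a r - 1 := by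
  have hcancel := Ring.mul_inverse_cancel _ hr
  rw [← resolvent, sub_mul, ← Algebra.smul_def] at hcancel
  rw [← hcancel, sub_sub_cancel]

theorem resolvent_sub_resolvent_eq_smul_mul (hr : r ∈ resolventSet R a)
    (hs : s ∈ resolventSet R a) :
    resolvent a r - resolvent a s = (s - r) • (resolvent a r * resolvent a s) := by
  have hmul : (r • resolvent a r - 1) * resolvent a s =
      resolvent a r * (s • resolvent a s - 1) := by
    rw [← resolvent_mul_self hr, ← self_mul_resolvent hs, mul_assoc]
  rw [sub_mul, mul_sub, smul_mul_assoc, mul_smul_comm, one_mul, mul_one,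
    sub_eq_sub_iff_add_eq_add] at hmul
  rw [sub_smul, sub_eq_sub_iff_add_eq_add, add_comm, hmul]

end Resolvent

section AllPass

open Filter Topology

variable {N M κ : Type*} [Fintype N] [DecidableEq N]

theorem tendsto_resolvent_atTop (A : Matrix N N ℝ) :
    Tendsto (resolvent A : ℝ → Matrix N N ℝ) atTop (𝓝 0) := by
  let _ : NormedRing (Matrix N N ℝ) := Matrix.linftyOpNormedRing
  let _ : NormedAlgebra ℝ (Matrix N N ℝ) := Matrix.linftyOpNormedAlgebra
  exact (spectrum.resolvent_tendsto_cobounded A).mono_left IsOrderBornology.atTop_le_cobounded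

theorem transpose_resolvent {R : Type*} [CommRing R] (A : Matrix N N R) (z : R) :
    (resolvent A z)ᵀ = resolvent Aᵀ z := by
  rw [resolvent, resolvent, ← nonsing_inv_eq_ringInverse, ← nonsing_inv_eq_ringInverse,
    transpose_nonsing_inv, transpose_sub, Algebra.algebraMap_eq_smul_one, transpose_smul,
    transpose_one]

/-- The points `y > 1` at which the resolvent of `A` and its reflection `z ↦ z⁻¹` are both defined.
The bound `1 < y` makes `z * y - 1` nonzero for any two such points. -/
def regularPoints (A : Matrix N N ℝ) : Set ℝ :=
  {y | 1 < y ∧ y ∈ resolventSet ℝ A ∧ y⁻¹ ∈ resolventSet ℝ A}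

theorem eventually_mem_regularPoints (A : Matrix N N ℝ) : ∀ᶠ y in atTop, y ∈ regularPoints A := by
  have hmem : ∀ᶠ y in atTop, y ∈ resolventSet ℝ A := by
    filter_upwards [atTop_le_cofinite A.finite_spectrum.compl_mem_cofinite] with y hy
    exact not_not.mp hy
  have hinv : ∀ᶠ y : ℝ in atTop, y⁻¹ ∈ resolventSet ℝ A := by
    have hfinite := A.finite_spectrum.preimage (inv_injective (G := ℝ)).injOn
    filter_upwards [atTop_le_cofinite hfinite.compl_mem_cofinite] with y hy
    exact not_not.mp hy
  filter_upwards [eventually_gt_atTop 1, hmem, hinv] with y h1 hy hy' using ⟨h1, hy, hy'⟩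

theorem eq_zero_of_mul_resolvent_mul_eq {A : Matrix N N ℝ} {L : Matrix M N ℝ} {T : Matrix N κ ℝ}
    {E : Matrix M κ ℝ} (h : ∀ y ∈ regularPoints A, L * resolvent A y * T = E) : E = 0 := by
  have hcont : Continuous fun Z : Matrix N N ℝ => L * Z * T := by fun_prop
  have hlim := (hcont.tendsto 0).comp (tendsto_resolvent_atTop A)
  rw [Matrix.mul_zero, Matrix.zero_mul] at hlim
  have hconst := hlim.congr' ((eventually_mem_regularPoints A).mono h)
  exact tendsto_nhds_unique tendsto_const_nhds hconst

theorem Observable.eq_zero_of_mul_resolvent_mul_eq_zero [Fintype M] {A : Matrix N N ℝ}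
    {C : Matrix M N ℝ} (hobs : Observable A C) {T : Matrix N κ ℝ}
    (hT : ∀ y ∈ regularPoints A, C * resolvent A y * T = 0) : T = 0 := by
  have hstep : ∀ T : Matrix N κ ℝ, (∀ y ∈ regularPoints A, C * resolvent A y * T = 0) →
      C * T = 0 ∧ ∀ y ∈ regularPoints A, C * resolvent A y * (A * T) = 0 := by
    intro T hT
    have hconst : ∀ y ∈ regularPoints A, C * resolvent A y * (A * T) = -(C * T) := by
      intro y hy
      rw [← Matrix.mul_assoc, Matrix.mul_assoc C, resolvent_mul_self hy.2.1, Matrix.mul_sub,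
        Matrix.mul_smul, Matrix.sub_mul, Matrix.smul_mul, hT y hy, smul_zero, zero_sub,
        Matrix.mul_one]
    have hzero := eq_zero_of_mul_resolvent_mul_eq hconst
    exact ⟨neg_eq_zero.mp hzero, fun y hy => (hconst y hy).trans hzero⟩
  have hpow : ∀ k, ∀ y ∈ regularPoints A, C * resolvent A y * (A ^ k * T) = 0 := by
    intro k
    induction k with
    | zero => simpa using hT
    | succ k ih =>
      rw [pow_succ', Matrix.mul_assoc]
      exact (hstep _ ih).2
  ext i j
  refine congrFun (hobs (T.col j) fun k _ => ?_) i
  have hCAT := (hstep _ (hpow k)).1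
  rw [← Matrix.mul_assoc] at hCAT
  exact funext fun l => congrFun (congrFun hCAT l) j

/-- The transfer function `z ↦ C (z - A)⁻¹ B + D`. -/
def transferFunction (A : Matrix N N ℝ) (B : Matrix N M ℝ) (C : Matrix M N ℝ) (D : Matrix M M ℝ)
    (z : ℝ) : Matrix M M ℝ :=
  C * resolvent A z * B + D

variable {A : Matrix N N ℝ} {B : Matrix N M ℝ} {C : Matrix M N ℝ} {D : Matrix M M ℝ}

theorem transferFunction_sub {z x : ℝ} (hz : z ∈ resolventSet ℝ A) (hx : x ∈ resolventSet ℝ A) :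
    transferFunction A B C D z - transferFunction A B C D x =
      (x - z) • (C * resolvent A z * (resolvent A x * B)) := by
  rw [transferFunction, transferFunction, add_sub_add_right_eq_sub, ← Matrix.sub_mul,
    ← Matrix.mul_sub, resolvent_sub_resolvent_eq_smul_mul hz hx]
  simp only [Matrix.mul_smul, Matrix.smul_mul, Matrix.mul_assoc]

variable [Fintype M]

/-- The value at `(C (y - A)⁻¹)ᵀ` of the sought solution `P` of `A P Aᵀ - P = B Bᵀ`: it is forced by
that equation together with `A P Cᵀ = B Dᵀ`. -/
def steinValue (A : Matrix N N ℝ) (B : Matrix N M ℝ) (C : Matrix M N ℝ) (D : Matrix M M ℝ)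
    (y : ℝ) : Matrix N M ℝ :=
  -y⁻¹ • (resolvent A y⁻¹ * B * (transferFunction A B C D y)ᵀ)

theorem smul_mul_steinValue_sub_steinValue {y : ℝ} (hy : y ∈ regularPoints A) :
    y • (A * steinValue A B C D y) - steinValue A B C D y =
      B * (transferFunction A B C D y)ᵀ := by
  have hy0 : y ≠ 0 := (zero_lt_one.trans hy.1).ne'
  rw [steinValue, Matrix.mul_assoc, Matrix.mul_smul, smul_smul, mul_neg, mul_inv_cancel₀ hy0,
    ← Matrix.mul_assoc, self_mul_resolvent hy.2.2, Matrix.sub_mul, Matrix.smul_mul, Matrix.one_mul,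
    neg_smul, neg_smul, one_smul, sub_neg_eq_add, neg_sub, sub_add_cancel]

theorem stein_sub_mul_transpose_eq {P : Matrix N N ℝ} {y : ℝ} (hy : y ∈ regularPoints A)
    (hP : P * (C * resolvent A y)ᵀ = steinValue A B C D y) :
    (A * P * Aᵀ - P - B * Bᵀ) * (C * resolvent A y)ᵀ = B * Dᵀ - A * (P * Cᵀ) := by
  set W := (C * resolvent A y)ᵀ with hW
  have hAW : Aᵀ * W = y • W - Cᵀ := by
    rw [hW, ← transpose_mul, Matrix.mul_assoc, resolvent_mul_self hy.2.1, Matrix.mul_sub,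
      Matrix.mul_smul, Matrix.mul_one, transpose_sub, transpose_smul]
  have hBF : B * (transferFunction A B C D y)ᵀ = B * Bᵀ * W + B * Dᵀ := by
    rw [transferFunction, transpose_add, transpose_mul _ B, Matrix.mul_add, Matrix.mul_assoc]
  calc (A * P * Aᵀ - P - B * Bᵀ) * W
      = A * (P * (Aᵀ * W)) - P * W - B * Bᵀ * W := by
        simp only [Matrix.sub_mul, Matrix.mul_assoc]
    _ = (y • (A * steinValue A B C D y) - steinValue A B C D y) - A * (P * Cᵀ) - B * Bᵀ * W := by
        rw [hAW, Matrix.mul_sub, Matrix.mul_smul, hP, Matrix.mul_sub, Matrix.mul_smul]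
        abel
    _ = B * Dᵀ - A * (P * Cᵀ) := by
        rw [smul_mul_steinValue_sub_steinValue hy, hBF]
        abel

variable [DecidableEq M]

theorem AllPass.transferFunction_inv_mul_transpose (hap : AllPass A B C D) {y : ℝ}
    (hy : y ∈ regularPoints A) :
    transferFunction A B C D y⁻¹ * (transferFunction A B C D y)ᵀ = 1 := by
  have hy0 : y ≠ 0 := (zero_lt_one.trans hy.1).ne'
  obtain ⟨-, hunit, hunit'⟩ := hy
  rw [spectrum.mem_resolventSet_iff, Algebra.algebraMap_eq_smul_one] at hunit hunit'
  have hunitT : IsUnit (y⁻¹⁻¹ • (1 : Matrix N N ℝ) - Aᵀ) := by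
    rwa [inv_inv, ← transpose_one, ← transpose_smul, ← transpose_sub, isUnit_transpose]
  have hmul := hap y⁻¹ (inv_ne_zero hy0) hunit' hunitT
  rw [inv_inv] at hmul
  rw [transferFunction, transferFunction, transpose_add, transpose_mul, transpose_mul,
    transpose_resolvent, ← Matrix.mul_assoc, resolvent, resolvent, ← nonsing_inv_eq_ringInverse,
    ← nonsing_inv_eq_ringInverse, Algebra.algebraMap_eq_smul_one, Algebra.algebraMap_eq_smul_one]
  exact hmul

theorem AllPass.smul_mul_resolvent_mul_steinValue (hap : AllPass A B C D) {z y : ℝ}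
    (hz : z ∈ regularPoints A) (hy : y ∈ regularPoints A) :
    (z * y - 1) • (C * resolvent A z * steinValue A B C D y) =
      transferFunction A B C D z * (transferFunction A B C D y)ᵀ - 1 := by
  have hy0 : y ≠ 0 := (zero_lt_one.trans hy.1).ne'
  have hscalar : (z * y - 1) * -y⁻¹ = y⁻¹ - z := by field_simp; ring
  rw [← hap.transferFunction_inv_mul_transpose hy, ← Matrix.sub_mul,
    transferFunction_sub hz.2.1 hy.2.2, steinValue, Matrix.mul_smul, smul_smul, hscalar,
    Matrix.smul_mul, Matrix.mul_assoc _ (_ * B)]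

theorem AllPass.transpose_mul_resolvent_mul_steinValue (hap : AllPass A B C D) {z y : ℝ}
    (hz : z ∈ regularPoints A) (hy : y ∈ regularPoints A) :
    (C * resolvent A y * steinValue A B C D z)ᵀ = C * resolvent A z * steinValue A B C D y := by
  have hne : z * y - 1 ≠ 0 := (sub_pos.mpr (one_lt_mul hz.1.le hy.1)).ne'
  refine smul_right_injective _ hne ?_
  change (z * y - 1) • _ = (z * y - 1) • _
  rw [← transpose_smul, hap.smul_mul_resolvent_mul_steinValue hz hy, mul_comm z y,
    hap.smul_mul_resolvent_mul_steinValue hy hz, transpose_sub, transpose_mul, transpose_transpose,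
    transpose_one]

theorem AllPass.exists_isSymm_mul_transpose_eq_steinValue (hap : AllPass A B C D)
    (hobs : Observable A C) :
    ∃ P : Matrix N N ℝ, P.IsSymm ∧
      ∀ y ∈ regularPoints A, P * (C * resolvent A y)ᵀ = steinValue A B C D y := by
  let w : regularPoints A × M → N → ℝ := fun i => (C * resolvent A (i.1 : ℝ)).row i.2
  let v : regularPoints A × M → N → ℝ := fun i => (steinValue A B C D i.1).col i.2
  have hw : Submodule.span ℝ (Set.range w) = ⊤ := by
    refine span_range_eq_top_of_dotProduct fun x hx => ?_
    refine replicateCol_injective (ι := Unit) ?_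
    rw [hobs.eq_zero_of_mul_resolvent_mul_eq_zero (T := replicateCol Unit x), replicateCol_zero]
    intro y hy
    ext j
    exact hx (⟨y, hy⟩, j)
  have hwv : ∀ i j, w i ⬝ᵥ v j = v i ⬝ᵥ w j := by
    rintro ⟨⟨z, hz⟩, a⟩ ⟨⟨y, hy⟩, b⟩
    rw [dotProduct_comm (v _)]
    exact congrFun (congrFun (hap.transpose_mul_resolvent_mul_steinValue hz hy).symm a) b
  obtain ⟨P, hPsymm, hP⟩ := exists_isSymm_mulVec_eq hw hwv
  refine ⟨P, hPsymm, fun y hy => ?_⟩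
  ext i j
  exact congrFun (hP (⟨y, hy⟩, j)) i

theorem AllPass.exists_isSymm_stein (hap : AllPass A B C D) (hobs : Observable A C) :
    ∃ P : Matrix N N ℝ, P.IsSymm ∧ A * P * Aᵀ - P = B * Bᵀ := by
  obtain ⟨P, hPsymm, hP⟩ := hap.exists_isSymm_mul_transpose_eq_steinValue hobs
  have hconst : ∀ y ∈ regularPoints A,
      C * resolvent A y * (A * P * Aᵀ - P - B * Bᵀ)ᵀ = (B * Dᵀ - A * (P * Cᵀ))ᵀ := by
    intro y hy
    rw [← stein_sub_mul_transpose_eq hy (hP y hy), transpose_mul, transpose_transpose]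
  have hzero := eq_zero_of_mul_resolvent_mul_eq hconst
  refine ⟨P, hPsymm, sub_eq_zero.mp (transpose_eq_zero.mp ?_)⟩
  exact hobs.eq_zero_of_mul_resolvent_mul_eq_zero fun y hy => (hconst y hy).trans hzero

end AllPass

section InvariantSubspaces

variable {K N M : Type*} [Field K] [Fintype N] [Fintype M] [DecidableEq M]

theorem exists_posSemidef_clmiMatrix_of_stein {A P : Matrix N N ℝ} {B : Matrix N M ℝ}
    (h : IsControllable A B) (hPsymm : P.IsSymm) (hP : A * P * Aᵀ - P = B * Bᵀ)
    {X : Submodule ℝ (N → ℝ)} (hX : ∀ v ∈ X, A *ᵥ v ∈ X) :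
    ∃ Q : Matrix N N ℝ, Q.IsSymm ∧ (clmiMatrix A B Q).PosSemidef ∧
      (clmiMatrix A B Q).rank = Fintype.card M ∧ LinearMap.ker Q.mulVecLin = X := by
  classical
  have hA : IsUnit (A - 1) := h.isUnit_sub_one_of_stein hP
  have hlyapunov := cayley_lyapunov_of_stein hA hP
  rw [Matrix.mul_assoc _ (B * Bᵀ), Matrix.mul_assoc B, ← transpose_mul, ← Matrix.mul_assoc]
    at hlyapunov
  obtain ⟨Q, hQsymm, hQ, hker⟩ := exists_isSymm_riccatiResidual_eq_zero (h.cayley hA) hPsymm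
    hlyapunov ((cayley_mulVec_mem_iff hA).mpr hX)
  exact ⟨Q, hQsymm, posSemidef_clmiMatrix hA hQsymm hQ,
    (rank_clmiMatrix_eq_card_iff hA B Q).mpr hQ, hker⟩

variable [DecidableEq N]

theorem mulVec_mem_ker_of_rank_clmiMatrix_eq_card [NeZero (2 : K)] {A Q : Matrix N N K}
    {B : Matrix N M K} (hA : IsUnit (A - 1)) (hQ : (clmiMatrix A B Q).rank = Fintype.card M) :
    ∀ v ∈ LinearMap.ker Q.mulVecLin, A *ᵥ v ∈ LinearMap.ker Q.mulVecLin :=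
  (cayley_mulVec_mem_iff hA).mp
    (mulVec_mem_ker_of_riccatiResidual_eq_zero ((rank_clmiMatrix_eq_card_iff hA B Q).mp hQ))

theorem Unmixed.eq_of_rank_clmiMatrix_eq_card_of_ker_eq {A Q₁ Q₂ : Matrix N N ℝ}
    {B : Matrix N M ℝ} (h : Unmixed A) (hA : IsUnit (A - 1))
    (hsymm₁ : Q₁.IsSymm) (hsymm₂ : Q₂.IsSymm)
    (hQ₁ : (clmiMatrix A B Q₁).rank = Fintype.card M)
    (hQ₂ : (clmiMatrix A B Q₂).rank = Fintype.card M)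
    (hker : LinearMap.ker Q₁.mulVecLin = LinearMap.ker Q₂.mulVecLin) : Q₁ = Q₂ := by
  rw [rank_clmiMatrix_eq_card_iff hA] at hQ₁ hQ₂
  have hGsymm : (((A - 1)⁻¹ * B) * ((A - 1)⁻¹ * B)ᵀ).IsSymm := by
    rw [IsSymm, transpose_mul, transpose_transpose]
  exact eq_of_riccatiResidual_eq_zero_of_ker_eq (isCoprime_charpoly_cayley ℂ hA h) hGsymm
    hsymm₁ hsymm₂ hQ₁ hQ₂ hker

end InvariantSubspaces

theorem CLMI_solutions_vs_invariant_subspaces_general {N M : Type*} [Fintype N] [DecidableEq N]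
    [Fintype M] [DecidableEq M] {A : Matrix N N ℝ} {B : Matrix N M ℝ} {C : Matrix M N ℝ}
    {D : Matrix M M ℝ} (hreach : Reachable A B) (hobs : Observable A C) (hap : AllPass A B C D) :
    (∀ X : Submodule ℝ (N → ℝ), (∀ v ∈ X, A *ᵥ v ∈ X) →
      ∃ Q : Matrix N N ℝ, Q.IsSymm ∧ (clmiMatrix A B Q).PosSemidef ∧
        (clmiMatrix A B Q).rank = Fintype.card M ∧ LinearMap.ker Q.mulVecLin = X) ∧
    (∀ Q : Matrix N N ℝ, (clmiMatrix A B Q).rank = Fintype.card M →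
      ∀ v ∈ LinearMap.ker Q.mulVecLin, A *ᵥ v ∈ LinearMap.ker Q.mulVecLin) ∧
    (Unmixed A → ∀ X : Submodule ℝ (N → ℝ), (∀ v ∈ X, A *ᵥ v ∈ X) →
      ∃! Q : Matrix N N ℝ, Q.IsSymm ∧ (clmiMatrix A B Q).PosSemidef ∧
        (clmiMatrix A B Q).rank = Fintype.card M ∧ LinearMap.ker Q.mulVecLin = X) := by
  obtain ⟨P, hPsymm, hP⟩ := hap.exists_isSymm_stein hobs
  have hctrb := hreach.isControllable
  have hA : IsUnit (A - 1) := hctrb.isUnit_sub_one_of_stein hP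
  refine ⟨fun X hX => exists_posSemidef_clmiMatrix_of_stein hctrb hPsymm hP hX,
    fun Q => mulVec_mem_ker_of_rank_clmiMatrix_eq_card hA, fun hunmixed X hX => ?_⟩
  refine existsUnique_of_exists_of_unique
    (exists_posSemidef_clmiMatrix_of_stein hctrb hPsymm hP hX) ?_
  rintro Q₁ Q₂ ⟨hsymm₁, -, hrank₁, hker₁⟩ ⟨hsymm₂, -, hrank₂, hker₂⟩
  exact hunmixed.eq_of_rank_clmiMatrix_eq_card_of_ker_eq hA hsymm₁ hsymm₂ hrank₁ hrank₂
    (hker₁.trans hker₂.symm)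

theorem CLMI_solutions_vs_invariant_subspaces
    (n m : ℕ) (A : Matrix (Fin n) (Fin n) ℝ) (B : Matrix (Fin n) (Fin m) ℝ)
    (C : Matrix (Fin m) (Fin n) ℝ) (D : Matrix (Fin m) (Fin m) ℝ)
    (hreach : Reachable A B) (hobs : Observable A C) (hap : AllPass A B C D) :
    (∀ X : Submodule ℝ (Fin n → ℝ), (∀ v ∈ X, A *ᵥ v ∈ X) →
      ∃ Q : Matrix (Fin n) (Fin n) ℝ, Q.IsSymm ∧
        (Matrix.fromBlocks (Aᵀ * Q * A - Q) (Aᵀ * Q * B)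
          (Bᵀ * Q * A) (Bᵀ * Q * B + 1)).PosSemidef ∧
        (Matrix.fromBlocks (Aᵀ * Q * A - Q) (Aᵀ * Q * B)
          (Bᵀ * Q * A) (Bᵀ * Q * B + 1)).rank = m ∧
        LinearMap.ker Q.mulVecLin = X) ∧
    (Unmixed A →
      (∀ X : Submodule ℝ (Fin n → ℝ), (∀ v ∈ X, A *ᵥ v ∈ X) →
        ∃! Q : Matrix (Fin n) (Fin n) ℝ, Q.IsSymm ∧
          (Matrix.fromBlocks (Aᵀ * Q * A - Q) (Aᵀ * Q * B)
            (Bᵀ * Q * A) (Bᵀ * Q * B + 1)).PosSemidef ∧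
          (Matrix.fromBlocks (Aᵀ * Q * A - Q) (Aᵀ * Q * B)
            (Bᵀ * Q * A) (Bᵀ * Q * B + 1)).rank = m ∧
          LinearMap.ker Q.mulVecLin = X) ∧
      (∀ Q : Matrix (Fin n) (Fin n) ℝ, Q.IsSymm →
        (Matrix.fromBlocks (Aᵀ * Q * A - Q) (Aᵀ * Q * B)
          (Bᵀ * Q * A) (Bᵀ * Q * B + 1)).PosSemidef →
        (Matrix.fromBlocks (Aᵀ * Q * A - Q) (Aᵀ * Q * B)
          (Bᵀ * Q * A) (Bᵀ * Q * B + 1)).rank = m →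
        ∀ v ∈ LinearMap.ker Q.mulVecLin, A *ᵥ v ∈ LinearMap.ker Q.mulVecLin)) := by
  have hgeneral := CLMI_solutions_vs_invariant_subspaces_general hreach hobs hap
  rw [Fintype.card_fin] at hgeneral
  exact ⟨hgeneral.1, fun hA => ⟨hgeneral.2.2 hA, fun Q _ _ => hgeneral.2.1 Q⟩⟩
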